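/- The set {(β,α) ∈ Δ : T_{β,α} has matching} is dense in Δ, i.e. its closure in ℝ² equals the closure of Δ. -/

import Mathlib

noncomputable section

/-- The upper intermediate β-transformation `T⁺_{β,α}` on `[0,1]`. -/
def Tpos (β α : ℝ) (x : ℝ) : ℝ :=
  if x = (1 - α) / β then 0 else Int.fract (β * x + α)

/-- The lower intermediate β-transformation `T⁻_{β,α}` on `[0,1]`. -/
def Tneg (β α : ℝ) (x : ℝ) : ℝ :=
  if x = (1 - α) / β then 1 else Int.fract (β * x + α)

/-- The itinerary `τ⁺_{β,α}(x)`: index `n` (from 0) is the `(n+1)`-st entry;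
entry is `false` (i.e. 0) iff the `n`-th iterate is `< c`. -/
def tauPos (β α x : ℝ) : ℕ → Bool :=
  fun n => if (Tpos β α)^[n] x < (1 - α) / β then false else true

/-- The itinerary `τ⁻_{β,α}(x)`: entry is `false` (i.e. 0) iff the iterate is `≤ c`. -/
def tauNeg (β α x : ℝ) : ℕ → Bool :=
  fun n => if (Tneg β α)^[n] x ≤ (1 - α) / β then false else true

/-- The kneading invariant `k₊` of `(β,α)`. -/
def kPlus (β α : ℝ) : ℕ → Bool := tauPos β α ((1 - α) / β)

/-- The kneading invariant `k₋` of `(β,α)`. -/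
def kMinus (β α : ℝ) : ℕ → Bool := tauNeg β α ((1 - α) / β)

/-- The kneading space `Ω_{β,α}`. -/
def OmegaSet (β α : ℝ) : Set (ℕ → Bool) :=
  (tauPos β α '' Set.Icc 0 1) ∪ (tauNeg β α '' Set.Icc 0 1)

/-- `Ω` is a subshift of finite type: there is a finite set of finite forbidden words
such that `Ω` is exactly the set of sequences avoiding them. -/
def IsSFT (Ω : Set (ℕ → Bool)) : Prop :=
  ∃ F : Finset (List Bool),
    Ω = {ω | ∀ m n : ℕ, List.ofFn (fun i : Fin n => ω (m + i)) ∉ F}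

/-- `T_{β,α}` has matching. -/
def HasMatching (β α : ℝ) : Prop :=
  ∃ n : ℕ, (Tpos β α)^[n] 0 = (Tneg β α)^[n] 1

/-- The matching time: the smallest `n` with `(T⁺)ⁿ(0) = (T⁻)ⁿ(1)`. -/
def matchingTime (β α : ℝ) : ℕ :=
  sInf {n : ℕ | (Tpos β α)^[n] 0 = (Tneg β α)^[n] 1}

/-- `T_{β,α}` and `T_{β,α'}` have the same matching: both have matching, with the same
matching time `n`, and their kneading invariants agree in the first `n+1` entries. -/
def SameMatching (β α α' : ℝ) : Prop :=
  HasMatching β α ∧ HasMatching β α' ∧ matchingTime β α = matchingTime β α' ∧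
    ∀ i ≤ matchingTime β α, kPlus β α i = kPlus β α' i ∧ kMinus β α i = kMinus β α' i

/-- The matching set `I(β,α)` (a subset of `(0, 2-β)`). -/
def matchInterval (β α : ℝ) : Set ℝ :=
  {α' | α' ∈ Set.Ioo (0 : ℝ) (2 - β) ∧ SameMatching β α α'}

/-- The parameter region `Δ`. -/
def DeltaSet : Set (ℝ × ℝ) :=
  {p | p.1 ∈ Set.Ioo (1 : ℝ) 2 ∧ p.2 ∈ Set.Ioo (0 : ℝ) (2 - p.1)}

/-- A sequence in `{0,1}^ℕ` is periodic. -/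
def IsPeriodicSeq (ω : ℕ → Bool) : Prop :=
  ∃ p : ℕ, 1 ≤ p ∧ ∀ n, ω (n + p) = ω n

/-- A sequence in `{0,1}^ℕ` is eventually periodic. -/
def IsEvPeriodicSeq (ω : ℕ → Bool) : Prop :=
  ∃ k : ℕ, IsPeriodicSeq (fun n => ω (n + k))

/-- Strict lexicographic order on `{0,1}^ℕ`: at the first index where they differ,
`ω` has entry 0 and `ν` has entry 1. -/
def lexLt (ω ν : ℕ → Bool) : Prop :=
  ∃ n : ℕ, (∀ m < n, ω m = ν m) ∧ ω n = false ∧ ν n = true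

/-!
Density reduces to finding, in every nonempty open set of parameters, one for which the
`T⁺`-orbits of both `0` and `1` pass through the discontinuity `c`: then `0` is periodic for `T⁺`
and `1` for `T⁻`, and both orbits are at `c` at a common time. Two facts produce such a parameter.

* If the orbit of `x` avoids `c` along a connected set of parameters, then the itinerary of `x` is
  constant there.
* An itinerary `d` of `x` is an expansion `x = ∑ (dₖ - α) β⁻ᵏ⁻¹`.

For fixed `β`, the expansion shows that an itinerary determines `α`, so the orbit of `0` reaches `c`
for a dense set of `α`. Such a parameter lies on a curve `α = g β` along which `0` keeps its
periodic itinerary. If the orbit of `1` avoided `c` along this curve, its itinerary would be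
constant too, and subtracting the two expansions would give a power series in `β⁻¹` without
constant term that equals `1` on an interval, against the identity theorem.
-/

open Filter Function Set
open scoped Topology

section PowerSeries

lemma summable_mul_pow_of_bounded {𝕜 : Type*} [NormedField 𝕜] [CompleteSpace 𝕜] {e : ℕ → 𝕜}
    {C : ℝ} (he : ∀ n, ‖e n‖ ≤ C) {z : 𝕜} (hz : ‖z‖ < 1) : Summable fun n => e n * z ^ n :=
  ((summable_geometric_of_lt_one (norm_nonneg z) hz).mul_left C).of_norm_bounded fun n => by
    rw [norm_mul, norm_pow]
    gcongr
    exact he n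

lemma one_le_radius_ofScalars_of_bounded {𝕜 : Type*} [NontriviallyNormedField 𝕜] {e : ℕ → 𝕜}
    {C : ℝ} (he : ∀ n, ‖e n‖ ≤ C) : 1 ≤ (FormalMultilinearSeries.ofScalars 𝕜 e).radius :=
  FormalMultilinearSeries.le_radius_of_bound (r := 1) _ C fun n => by
    simpa [FormalMultilinearSeries.ofScalars_norm] using he n

lemma eq_zero_of_eventually_hasSum_mul_pow_succ {𝕜 : Type*} [RCLike 𝕜] {e : ℕ → 𝕜} {C : ℝ}
    (he : ∀ n, ‖e n‖ ≤ C) {z₀ s : 𝕜} (hz₀ : ‖z₀‖ < 1)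
    (hs : ∀ᶠ z in 𝓝 z₀, HasSum (fun n => e n * z ^ (n + 1)) s) : s = 0 := by
  let f := FormalMultilinearSeries.ofScalarsSum (E := 𝕜) e
  have hradius := one_le_radius_ofScalars_of_bounded he
  have hf : AnalyticOnNhd 𝕜 f (Metric.ball 0 1) := fun z hz =>
    (FormalMultilinearSeries.hasFPowerSeriesOnBall _ (one_pos.trans_le hradius)).analyticAt_of_mem
      (Metric.eball_subset_eball hradius
        (by rwa [← ENNReal.coe_one, Metric.eball_coe, NNReal.coe_one]))
  have hfs : (fun z => f z * z) =ᶠ[𝓝 z₀] fun _ => s := by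
    filter_upwards [hs] with z hz
    simp only [pow_succ, ← mul_assoc] at hz
    rw [← hz.tsum_eq, tsum_mul_right]
    simp only [f, FormalMultilinearSeries.ofScalarsSum_eq_tsum, smul_eq_mul]
  have hEqOn := (hf.mul analyticOnNhd_id).eqOn_of_preconnected_of_eventuallyEq
    analyticOnNhd_const (convex_ball (0 : 𝕜) 1).isPreconnected (by simpa using hz₀) hfs
  simpa using (hEqOn (Metric.mem_ball_self one_pos)).symm

end PowerSeries

variable {β α x : ℝ}

section Map

lemma isOpen_DeltaSet : IsOpen DeltaSet :=
  (isOpen_Ioo.preimage continuous_fst).inter <|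
    (isOpen_lt continuous_const continuous_snd).inter
      (isOpen_lt continuous_snd (continuous_const.sub continuous_fst))

lemma one_lt_of_mem_DeltaSet (h : (β, α) ∈ DeltaSet) : 1 < β := h.1.1

lemma pos_of_mem_DeltaSet (h : (β, α) ∈ DeltaSet) : 0 < β :=
  zero_lt_one.trans (one_lt_of_mem_DeltaSet h)

lemma Tpos_critical (β α : ℝ) : Tpos β α ((1 - α) / β) = 0 := if_pos rfl

lemma Tneg_critical (β α : ℝ) : Tneg β α ((1 - α) / β) = 1 := if_pos rfl

lemma Tpos_of_ne_critical (hx : x ≠ (1 - α) / β) : Tpos β α x = Int.fract (β * x + α) :=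
  if_neg hx

lemma Tneg_of_ne_critical (hx : x ≠ (1 - α) / β) : Tneg β α x = Int.fract (β * x + α) :=
  if_neg hx

lemma Tpos_of_lt_critical (h : (β, α) ∈ DeltaSet) (hx : 0 ≤ x) (hc : x < (1 - α) / β) :
    Tpos β α x = β * x + α := by
  have hβ := pos_of_mem_DeltaSet h
  obtain ⟨-, hα, -⟩ := h
  rw [Tpos_of_ne_critical hc.ne, Int.fract_eq_self]
  rw [lt_div_iff₀' hβ] at hc
  exact ⟨by positivity, by linarith⟩

lemma Tpos_of_critical_le (h : (β, α) ∈ DeltaSet) (hx : x ≤ 1) (hc : (1 - α) / β ≤ x) :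
    Tpos β α x = β * x + α - 1 := by
  have hβ := pos_of_mem_DeltaSet h
  obtain ⟨-, -, hα : α < 2 - β⟩ := h
  rcases hc.eq_or_lt with rfl | hc
  · rw [Tpos_critical, mul_div_cancel₀ _ hβ.ne']
    ring
  · rw [Tpos_of_ne_critical hc.ne', ← Int.fract_sub_one, Int.fract_eq_self]
    rw [div_lt_iff₀' hβ] at hc
    exact ⟨by linarith, by nlinarith⟩

lemma mapsTo_Tpos (β α : ℝ) : MapsTo (Tpos β α) (Icc 0 1) (Icc 0 1) := fun x _ => by
  unfold Tpos
  split_ifs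
  · exact left_mem_Icc.2 zero_le_one
  · exact ⟨Int.fract_nonneg _, (Int.fract_lt_one _).le⟩

lemma Tpos_iterate_mem_Icc (hx : x ∈ Icc (0 : ℝ) 1) (n : ℕ) : (Tpos β α)^[n] x ∈ Icc (0 : ℝ) 1 :=
  (mapsTo_Tpos β α).iterate n hx

lemma Tpos_iterate_succ (h : (β, α) ∈ DeltaSet) (hx : x ∈ Icc (0 : ℝ) 1) (n : ℕ) :
    (Tpos β α)^[n + 1] x = β * (Tpos β α)^[n] x + α - (tauPos β α x n).toNat := by
  have hmem := Tpos_iterate_mem_Icc (β := β) (α := α) hx n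
  rw [iterate_succ_apply']
  rcases lt_or_ge ((Tpos β α)^[n] x) ((1 - α) / β) with hc | hc
  · simp [Tpos_of_lt_critical h hmem.1 hc, tauPos, hc]
  · simp [Tpos_of_critical_le h hmem.2 hc, tauPos, hc.not_gt]

lemma tauPos_eq_true_of_iterate_eq_critical {n : ℕ} (hn : (Tpos β α)^[n] x = (1 - α) / β) :
    tauPos β α x n = true := by
  simp [tauPos, hn]

lemma Tneg_iterate_eq_Tpos_iterate {n : ℕ} (h : ∀ k < n, (Tpos β α)^[k] x ≠ (1 - α) / β) :
    (Tneg β α)^[n] x = (Tpos β α)^[n] x := by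
  induction n with
  | zero => rfl
  | succ n ih =>
    rw [iterate_succ_apply', iterate_succ_apply', ih fun k hk => h k (hk.trans n.lt_succ_self),
      Tpos_of_ne_critical (h n n.lt_succ_self), Tneg_of_ne_critical (h n n.lt_succ_self)]

end Map

section Matching

/-- The `T⁺`-orbit of `x` passes through the discontinuity `c = (1 - α) / β`. As `T⁺` and `T⁻`
differ only at `c`, so does then the `T⁻`-orbit of `x`, and `T⁻` needs no separate notion. -/
def HitsCritical (β α x : ℝ) : Prop :=
  ∃ n, (Tpos β α)^[n] x = (1 - α) / β

lemma HitsCritical.exists_Tneg_iterate_eq (h : HitsCritical β α x) :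
    ∃ n, (Tneg β α)^[n] x = (1 - α) / β := by
  classical
  refine ⟨Nat.find h, ?_⟩
  rw [Tneg_iterate_eq_Tpos_iterate fun k => Nat.find_min h, Nat.find_spec h]

lemma isPeriodicPt_Tpos_zero {p : ℕ} (hp : (Tpos β α)^[p] 0 = (1 - α) / β) :
    IsPeriodicPt (Tpos β α) (p + 1) 0 := by
  rw [IsPeriodicPt, IsFixedPt, iterate_succ_apply', hp, Tpos_critical]

lemma isPeriodicPt_Tneg_one {q : ℕ} (hq : (Tneg β α)^[q] 1 = (1 - α) / β) :
    IsPeriodicPt (Tneg β α) (q + 1) 1 := by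
  rw [IsPeriodicPt, IsFixedPt, iterate_succ_apply', hq, Tneg_critical]

lemma hasMatching_of_hitsCritical (h0 : HitsCritical β α 0) (h1 : HitsCritical β α 1) :
    HasMatching β α := by
  obtain ⟨p, hp⟩ := h0
  obtain ⟨q, hq⟩ := h1.exists_Tneg_iterate_eq
  refine ⟨p + (p + 1) * q, ?_⟩
  calc (Tpos β α)^[p + (p + 1) * q] 0
    _ = (Tpos β α)^[p] 0 := by
      rw [iterate_add_apply, ((isPeriodicPt_Tpos_zero hp).mul_const q).eq]
    _ = (Tneg β α)^[q] 1 := hp.trans hq.symm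
    _ = (Tneg β α)^[q + (q + 1) * p] 1 := by
      rw [iterate_add_apply, ((isPeriodicPt_Tneg_one hq).mul_const p).eq]
    _ = (Tneg β α)^[p + (p + 1) * q] 1 := by
      rw [show q + (q + 1) * p = p + (p + 1) * q by ring]

end Matching

section Expansion

lemma sum_tauPos_add_iterate (h : (β, α) ∈ DeltaSet) (hx : x ∈ Icc (0 : ℝ) 1) (n : ℕ) :
    ∑ k ∈ Finset.range n, ((tauPos β α x k).toNat - α) * β⁻¹ ^ (k + 1) +
      (Tpos β α)^[n] x * β⁻¹ ^ n = x := by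
  induction n with
  | zero => simp
  | succ n ih =>
    have hpow : β⁻¹ ^ n = β * β⁻¹ ^ (n + 1) := by
      rw [pow_succ', mul_inv_cancel_left₀ (pos_of_mem_DeltaSet h).ne']
    rw [Finset.sum_range_succ, Tpos_iterate_succ h hx]
    linear_combination ih - (Tpos β α)^[n] x * hpow

lemma norm_inv_lt_one_of_mem_DeltaSet (h : (β, α) ∈ DeltaSet) : ‖β⁻¹‖ < 1 := by
  rw [norm_inv, Real.norm_of_nonneg (pos_of_mem_DeltaSet h).le]
  exact inv_lt_one_of_one_lt₀ (one_lt_of_mem_DeltaSet h)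

lemma hasSum_tauPos (h : (β, α) ∈ DeltaSet) (hx : x ∈ Icc (0 : ℝ) 1) :
    HasSum (fun k => ((tauPos β α x k).toNat - α) * β⁻¹ ^ (k + 1)) x := by
  have hnorm := norm_inv_lt_one_of_mem_DeltaSet h
  have hdigit : ∀ k, ‖((tauPos β α x k).toNat - α : ℝ)‖ ≤ 1 + ‖α‖ := fun k => by
    refine (norm_sub_le _ _).trans (add_le_add_left ?_ _)
    cases tauPos β α x k <;> simp
  have hsummable : Summable fun k => ((tauPos β α x k).toNat - α) * β⁻¹ ^ (k + 1) := by
    simpa only [pow_succ, ← mul_assoc] using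
      (summable_mul_pow_of_bounded hdigit hnorm).mul_right β⁻¹
  have hremainder : Tendsto (fun n => (Tpos β α)^[n] x * β⁻¹ ^ n) atTop (𝓝 0) :=
    bdd_le_mul_tendsto_zero (.of_forall fun n => (Tpos_iterate_mem_Icc hx n).1)
      (.of_forall fun n => (Tpos_iterate_mem_Icc hx n).2)
      (tendsto_pow_atTop_nhds_zero_of_norm_lt_one hnorm)
  rw [hsummable.hasSum_iff_tendsto_nat]
  simpa only [sub_zero, ← eq_sub_of_add_eq (sum_tauPos_add_iterate h hx _)] using
    hremainder.const_sub x

lemma tauPos_ne_of_lt {α' : ℝ} (h : (β, α) ∈ DeltaSet) (h' : (β, α') ∈ DeltaSet)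
    (hx : x ∈ Icc (0 : ℝ) 1) (hα : α < α') : tauPos β α x ≠ tauPos β α' x := fun htau => by
  have hβ := pos_of_mem_DeltaSet h
  have hterm : ∀ k, ((tauPos β α' x k).toNat - α') * β⁻¹ ^ (k + 1) <
      ((tauPos β α x k).toNat - α) * β⁻¹ ^ (k + 1) := fun k => by
    rw [htau]
    gcongr
  exact (hasSum_lt (fun k => (hterm k).le) (hterm 0) (hasSum_tauPos h' hx)
    (hasSum_tauPos h hx)).false

lemma eq_of_eventually_tauPos_eq {y β₀ : ℝ} {g : ℝ → ℝ} {a b : ℕ → Bool}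
    (hx : x ∈ Icc (0 : ℝ) 1) (hy : y ∈ Icc (0 : ℝ) 1) (hΔ : ∀ᶠ β in 𝓝 β₀, (β, g β) ∈ DeltaSet)
    (ha : ∀ᶠ β in 𝓝 β₀, tauPos β (g β) x = a) (hb : ∀ᶠ β in 𝓝 β₀, tauPos β (g β) y = b) :
    x = y := by
  have hβ₀ := hΔ.self_of_nhds
  have hdigit : ∀ k, ‖((a k).toNat - (b k).toNat : ℝ)‖ ≤ 1 := fun k => by
    cases a k <;> cases b k <;> simp
  have hinv : Tendsto (·⁻¹) (𝓝 β₀⁻¹) (𝓝 β₀) := by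
    simpa only [inv_inv] using tendsto_inv₀ (inv_ne_zero (pos_of_mem_DeltaSet hβ₀).ne')
  refine sub_eq_zero.1 <| eq_zero_of_eventually_hasSum_mul_pow_succ hdigit
    (norm_inv_lt_one_of_mem_DeltaSet hβ₀) ?_
  filter_upwards [hinv.eventually (hΔ.and (ha.and hb))] with z ⟨hz, hza, hzb⟩
  have hdiff := (hasSum_tauPos hz hx).sub (hasSum_tauPos hz hy)
  simpa only [hza, hzb, ← sub_mul, sub_sub_sub_cancel_right, inv_inv] using hdiff

end Expansion

section Continuity

variable {q : ℝ × ℝ}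

lemma continuousAt_critical (hq : q ∈ DeltaSet) :
    ContinuousAt (fun r : ℝ × ℝ => (1 - r.2) / r.1) q :=
  (continuousAt_const.sub continuousAt_snd).div continuousAt_fst (pos_of_mem_DeltaSet hq).ne'

lemma affine_ne_floor (h : (β, α) ∈ DeltaSet) (hx : x ∈ Icc (0 : ℝ) 1) (hc : x ≠ (1 - α) / β) :
    β * x + α ≠ ⌊β * x + α⌋ := fun heq => by
  have hβ := pos_of_mem_DeltaSet h
  obtain ⟨-, hα : 0 < α, hα' : α < 2 - β⟩ := h
  have hpos : (0 : ℝ) < ⌊β * x + α⌋ := by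
    rw [← heq]
    linarith [mul_nonneg hβ.le hx.1]
  have hlt : (⌊β * x + α⌋ : ℝ) < 2 := by
    rw [← heq]
    linarith [mul_le_of_le_one_right hβ.le hx.2]
  have hone : ⌊β * x + α⌋ = 1 := by
    norm_cast at hpos hlt
    lia
  rw [hone, Int.cast_one] at heq
  exact hc (by rw [eq_div_iff hβ.ne']; linarith)

lemma continuousAt_Tpos (hq : q ∈ DeltaSet) (hx : x ∈ Icc (0 : ℝ) 1) (hc : x ≠ (1 - q.2) / q.1) :
    ContinuousAt (fun r : (ℝ × ℝ) × ℝ => Tpos r.1.1 r.1.2 r.2) (q, x) := by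
  have hsub : ContinuousAt (fun r : (ℝ × ℝ) × ℝ => r.2 - (1 - r.1.2) / r.1.1) (q, x) :=
    continuousAt_snd.sub ((continuousAt_critical hq).comp_of_eq continuousAt_fst rfl)
  have hne : ∀ᶠ r : (ℝ × ℝ) × ℝ in 𝓝 (q, x), r.2 ≠ (1 - r.1.2) / r.1.1 :=
    (hsub.eventually_ne (sub_ne_zero.2 hc)).mono fun _ => sub_ne_zero.1
  have hfloor : q.1 * x + q.2 ≠ ⌊q.1 * x + q.2⌋ := affine_ne_floor hq hx hc
  have hfract : ContinuousAt (fun r : (ℝ × ℝ) × ℝ => Int.fract (r.1.1 * r.2 + r.1.2)) (q, x) :=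
    (continuousAt_fract hfloor).comp_of_eq (f := fun r : (ℝ × ℝ) × ℝ => r.1.1 * r.2 + r.1.2)
      (by fun_prop) rfl
  exact hfract.congr (hne.mono fun r hr => (Tpos_of_ne_critical hr).symm)

lemma continuousAt_Tpos_iterate (hq : q ∈ DeltaSet) (hx : x ∈ Icc (0 : ℝ) 1) {n : ℕ}
    (hn : ∀ k < n, (Tpos q.1 q.2)^[k] x ≠ (1 - q.2) / q.1) :
    ContinuousAt (fun r : ℝ × ℝ => (Tpos r.1 r.2)^[n] x) q := by
  induction n with
  | zero => exact continuousAt_const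
  | succ n ih =>
    simp only [iterate_succ_apply']
    exact (continuousAt_Tpos hq (Tpos_iterate_mem_Icc hx n) (hn n n.lt_succ_self)).comp
      (f := fun r : ℝ × ℝ => (r, (Tpos r.1 r.2)^[n] x))
      (continuousAt_id.prodMk (ih fun k hk => hn k (hk.trans n.lt_succ_self)))

lemma eventually_tauPos_eq (hq : q ∈ DeltaSet) (hx : x ∈ Icc (0 : ℝ) 1) {n : ℕ}
    (hn : ∀ k ≤ n, (Tpos q.1 q.2)^[k] x ≠ (1 - q.2) / q.1) :
    ∀ᶠ r in 𝓝 q, tauPos r.1 r.2 x n = tauPos q.1 q.2 x n := by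
  have hT := continuousAt_Tpos_iterate hq hx fun k hk => hn k hk.le
  have hc := continuousAt_critical hq
  rcases (hn n le_rfl).lt_or_gt with hlt | hlt
  · filter_upwards [hT.eventually_lt hc hlt] with r hr
    simp [tauPos, hr, hlt]
  · filter_upwards [hc.eventually_lt hT hlt] with r hr
    simp [tauPos, hr.not_gt, hlt.not_gt]

lemma tauPos_eq_of_isPreconnected {S : Set (ℝ × ℝ)} (hS : IsPreconnected S) (hΔ : S ⊆ DeltaSet)
    (hx : x ∈ Icc (0 : ℝ) 1) (hc : ∀ q ∈ S, ¬ HitsCritical q.1 q.2 x) {r : ℝ × ℝ} (hq : q ∈ S)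
    (hr : r ∈ S) : tauPos q.1 q.2 x = tauPos r.1 r.2 x := by
  have hcont : ∀ n, ContinuousOn (fun q : ℝ × ℝ => tauPos q.1 q.2 x n) S := fun n q hq => by
    refine ContinuousAt.continuousWithinAt ?_
    rw [ContinuousAt, nhds_discrete Bool, tendsto_pure]
    exact eventually_tauPos_eq (hΔ hq) hx fun k _ hk => hc q hq ⟨k, hk⟩
  exact funext fun n => hS.constant (hcont n) hq hr

end Continuity

section Periodic

/-- The value of `α` for which `0` can follow the digits `a` up to time `p`, with `a p = 1`, and
return to itself at time `p + 1`: the solution of `∑_{k ≤ p} (aₖ - α) β⁻ᵏ⁻¹ = 0`. -/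
def returnParameter (a : ℕ → Bool) (p : ℕ) (β : ℝ) : ℝ :=
  (∑ k ∈ Finset.range (p + 1), (a k).toNat * β⁻¹ ^ (k + 1)) /
    ∑ k ∈ Finset.range (p + 1), β⁻¹ ^ (k + 1)

lemma sum_range_succ_inv_pow_pos (hβ : 0 < β) (p : ℕ) :
    0 < ∑ k ∈ Finset.range (p + 1), β⁻¹ ^ (k + 1) :=
  Finset.sum_pos (fun _ _ => by positivity) Finset.nonempty_range_add_one

lemma continuousOn_returnParameter (a : ℕ → Bool) (p : ℕ) :
    ContinuousOn (returnParameter a p) (Ioi 0) := by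
  have hinv : ContinuousOn (fun β : ℝ => β⁻¹) (Ioi 0) :=
    continuousOn_inv₀.mono fun β hβ => (mem_Ioi.1 hβ).ne'
  refine ContinuousOn.div ?_ ?_ fun β hβ => (sum_range_succ_inv_pow_pos hβ p).ne'
  · exact continuousOn_finsetSum _ fun k _ => continuousOn_const.mul (hinv.pow _)
  · exact continuousOn_finsetSum _ fun k _ => hinv.pow _

lemma iterate_zero_eq_critical_iff (h : (β, α) ∈ DeltaSet) {a : ℕ → Bool} {p : ℕ}
    (ha : ∀ k < p, tauPos β α 0 k = a k) (hap : a p = true) :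
    (Tpos β α)^[p] 0 = (1 - α) / β ↔ α = returnParameter a p β := by
  have hβ := pos_of_mem_DeltaSet h
  have hpow : β⁻¹ ^ p = β * β⁻¹ ^ (p + 1) := by
    rw [pow_succ', mul_inv_cancel_left₀ hβ.ne']
  have hsum := sum_tauPos_add_iterate h (left_mem_Icc.2 zero_le_one) p
  rw [Finset.sum_congr rfl fun k hk => by rw [ha k (Finset.mem_range.1 hk)]] at hsum
  simp only [sub_mul, Finset.sum_sub_distrib, ← Finset.mul_sum] at hsum
  rw [returnParameter, eq_div_iff (sum_range_succ_inv_pow_pos hβ p).ne', eq_div_iff hβ.ne',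
    Finset.sum_range_succ, Finset.sum_range_succ, hap, Bool.toNat_true, Nat.cast_one,
    ← mul_left_inj' (pow_ne_zero (p + 1) (inv_ne_zero hβ.ne'))]
  constructor <;> intro heq
  · linear_combination heq - hsum + (Tpos β α)^[p] 0 * hpow
  · linear_combination heq + hsum - (Tpos β α)^[p] 0 * hpow

lemma tauPos_zero_mod {p : ℕ} (hp : (Tpos β α)^[p] 0 = (1 - α) / β) (n : ℕ) :
    tauPos β α 0 (n % (p + 1)) = tauPos β α 0 n := by
  simp only [tauPos, (isPeriodicPt_Tpos_zero hp).iterate_mod_apply]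

lemma tauPos_zero_eq_of_eq_of_lt {β' α' : ℝ} {p : ℕ} (hp : (Tpos β α)^[p] 0 = (1 - α) / β)
    (hp' : (Tpos β' α')^[p] 0 = (1 - α') / β')
    (heq : ∀ k < p, tauPos β α 0 k = tauPos β' α' 0 k) : tauPos β α 0 = tauPos β' α' 0 := by
  funext n
  rw [← tauPos_zero_mod hp, ← tauPos_zero_mod hp']
  rcases Nat.lt_succ_iff_lt_or_eq.1 (Nat.mod_lt n p.succ_pos) with hn | hn
  · exact heq _ hn
  · rw [hn, tauPos_eq_true_of_iterate_eq_critical hp, tauPos_eq_true_of_iterate_eq_critical hp']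

lemma HitsCritical.exists_curve (h : (β, α) ∈ DeltaSet) (h0 : HitsCritical β α 0) :
    ∃ g : ℝ → ℝ, g β = α ∧ ContinuousOn g (Ioi 0) ∧
      ∀ᶠ β' in 𝓝 β, HitsCritical β' (g β') 0 ∧ tauPos β' (g β') 0 = tauPos β α 0 := by
  classical
  obtain ⟨p, hp, hmin⟩ : ∃ p, (Tpos β α)^[p] 0 = (1 - α) / β ∧
      ∀ k < p, (Tpos β α)^[k] 0 ≠ (1 - α) / β :=
    ⟨Nat.find h0, Nat.find_spec h0, fun k => Nat.find_min h0⟩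
  have hap := tauPos_eq_true_of_iterate_eq_critical hp
  set g := returnParameter (tauPos β α 0) p
  have hg : ContinuousOn g (Ioi 0) := continuousOn_returnParameter _ p
  have hgβ : g β = α := ((iterate_zero_eq_critical_iff h (fun _ _ => rfl) hap).1 hp).symm
  have hgraph : Tendsto (fun β' => (β', g β')) (𝓝 β) (𝓝 (β, α)) := by
    simpa only [id_eq, hgβ] using
      (continuousAt_id.prodMk (hg.continuousAt (Ioi_mem_nhds (pos_of_mem_DeltaSet h)))).tendsto
  have hdigits : ∀ᶠ r in 𝓝 (β, α), ∀ k ∈ Finset.range p,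
      tauPos r.1 r.2 0 k = tauPos β α 0 k := by
    rw [eventually_all_finset]
    exact fun k hk => eventually_tauPos_eq h (left_mem_Icc.2 zero_le_one) fun j hj =>
      hmin j (hj.trans_lt (Finset.mem_range.1 hk))
  refine ⟨g, hgβ, hg, ?_⟩
  filter_upwards [hgraph.eventually hdigits, hgraph.eventually (isOpen_DeltaSet.eventually_mem h)]
    with β' hdig hΔ
  simp only [Finset.mem_range] at hdig
  have hp' := (iterate_zero_eq_critical_iff hΔ hdig hap).2 rfl
  exact ⟨⟨p, hp'⟩, tauPos_zero_eq_of_eq_of_lt hp' hp hdig⟩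

end Periodic

section Density

variable {U : Set (ℝ × ℝ)}

lemma exists_hitsCritical (hU : IsOpen U) (hUΔ : U ⊆ DeltaSet) (h : (β, α) ∈ U)
    (hx : x ∈ Icc (0 : ℝ) 1) : ∃ α', (β, α') ∈ U ∧ HitsCritical β α' x := by
  by_contra! hcon
  have hnhds : {t | (β, t) ∈ U} ∈ 𝓝 α := (hU.preimage (Continuous.prodMk_right β)).mem_nhds h
  obtain ⟨u, hαu : α < u, hsub⟩ :=
    mem_nhdsGE_iff_exists_Icc_subset.1 (mem_nhdsWithin_of_mem_nhds hnhds)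
  have hSU : {β} ×ˢ Icc α u ⊆ U := by
    rintro ⟨_, t⟩ ⟨rfl, ht⟩
    exact hsub ht
  have havoid : ∀ q ∈ {β} ×ˢ Icc α u, ¬ HitsCritical q.1 q.2 x := by
    rintro ⟨_, t⟩ ⟨rfl, ht⟩
    exact hcon t (hsub ht)
  have htau : tauPos β α x = tauPos β u x :=
    tauPos_eq_of_isPreconnected (q := (β, α)) (r := (β, u))
      (isPreconnected_singleton.prod isPreconnected_Icc) (hSU.trans hUΔ) hx havoid
      ⟨rfl, left_mem_Icc.2 hαu.le⟩ ⟨rfl, right_mem_Icc.2 hαu.le⟩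
  exact tauPos_ne_of_lt (hUΔ h) (hUΔ (hsub (right_mem_Icc.2 hαu.le))) hx hαu htau

lemma exists_hitsCritical_zero_and_one (hU : IsOpen U) (hUΔ : U ⊆ DeltaSet) (hne : U.Nonempty) :
    ∃ q ∈ U, HitsCritical q.1 q.2 0 ∧ HitsCritical q.1 q.2 1 := by
  obtain ⟨⟨β, α'⟩, hα'⟩ := hne
  obtain ⟨α, hα, h0⟩ := exists_hitsCritical hU hUΔ hα' (left_mem_Icc.2 zero_le_one)
  obtain ⟨g, hgβ, hg, hcurve⟩ := h0.exists_curve (hUΔ hα)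
  have hgU : ∀ᶠ β' in 𝓝 β, (β', g β') ∈ U :=
    (continuousAt_id.prodMk (hg.continuousAt (Ioi_mem_nhds (pos_of_mem_DeltaSet (hUΔ hα)))))
      |>.eventually_mem (hU.mem_nhds (by simpa [hgβ] using hα))
  obtain ⟨ε, hε, hball⟩ := Metric.eventually_nhds_iff_ball.1 (hcurve.and hgU)
  by_contra! hcon
  set S := (fun β' => (β', g β')) '' Metric.ball β ε
  have hSU : S ⊆ U := image_subset_iff.2 fun β' hβ' => (hball β' hβ').2
  have hS : IsPreconnected S := (convex_ball β ε).isPreconnected.image _ <|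
    continuousOn_id.prodMk <| hg.mono fun β' hβ' =>
      pos_of_mem_DeltaSet (hUΔ (hball β' hβ').2)
  have havoid : ∀ q ∈ S, ¬ HitsCritical q.1 q.2 1 := forall_mem_image.2 fun β' hβ' =>
    hcon _ (hball β' hβ').2 (hball β' hβ').1.1
  have htau1 : ∀ β' ∈ Metric.ball β ε, tauPos β' (g β') 1 = tauPos β (g β) 1 := fun β' hβ' =>
    tauPos_eq_of_isPreconnected hS (hSU.trans hUΔ) (right_mem_Icc.2 zero_le_one) havoid
      (mem_image_of_mem _ hβ') (mem_image_of_mem _ (Metric.mem_ball_self hε))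
  exact zero_ne_one <| eq_of_eventually_tauPos_eq (left_mem_Icc.2 zero_le_one)
    (right_mem_Icc.2 zero_le_one) (hgU.mono fun _ h => hUΔ h) (hcurve.mono fun _ h => h.2)
    (eventually_of_mem (Metric.ball_mem_nhds β hε) htau1)

end Density

theorem matching_dense_in_Delta :
    closure {p : ℝ × ℝ | p ∈ DeltaSet ∧ HasMatching p.1 p.2} = closure DeltaSet := by
  refine (closure_mono fun _ h => h.1).antisymm
    (closure_minimal (fun q hq => mem_closure_iff.2 fun V hV hqV => ?_) isClosed_closure)
  obtain ⟨r, hr, h0, h1⟩ := exists_hitsCritical_zero_and_one (hV.inter isOpen_DeltaSet)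
    inter_subset_right ⟨q, hqV, hq⟩
  exact ⟨r, hr.1, hr.2, hasMatching_of_hitsCritical h0 h1⟩
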